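/- arXiv:1405.6196 — 2 statements merged into one kernel-verified Lean document; each statement's English description precedes it below -/
import Mathlib

section
/- If 0 ≤ b₀ ≤ b₁ ≤ 1 and 0 ≤ ε₀ ≤ ε₁, then Γ₁(b₀, ε₀) ≥ Γ₁(b₁, ε₁) (as elements of [0, ∞]). In particular, for every b₀ ∈ [0, 1] and every ε₀ ≥ 0, Γ₁(b₀, ε₀) ≥ Γ₁(1, ε₀). -/
open Real ENNReal

noncomputable def f₁ (w θ η W c₁ c₂ τ b₀ ε₀ : ℝ) : ℝ :=
  b₀ + W * ε₀ / (w + θ) * (Real.exp ((w + θ) * τ) - 1) +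
    (c₁ - c₂) / w * (Real.exp (w * τ) - 1) +
    c₂ / (w + η) * (Real.exp ((w + η) * τ) - 1)

noncomputable def f₂ (w τ : ℝ) : ℝ := Real.exp (w * τ)

/-- The comparison function `b̃` of Lemma 1. -/
noncomputable def btilde (w θ η W c₁ c₂ τ b₀ ε₀ : ℝ) : ℝ :=
  f₁ w θ η W c₁ c₂ τ b₀ ε₀ / f₂ w τ

/-- `Γ₁(b₀, ε₀)`: the infimum in `[0, ∞]` of the set
`{τ ≥ 0 : b̃(τ, b₀, ε₀) = 1 and (∂/∂τ)b̃(τ, b₀, ε₀) ≥ 0}` (`∞` if the set is empty). -/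
noncomputable def Γ₁ (w θ η W c₁ c₂ b₀ ε₀ : ℝ) : ℝ≥0∞ :=
  sInf {x : ℝ≥0∞ | ∃ τ : ℝ, 0 ≤ τ ∧ x = ENNReal.ofReal τ ∧
    btilde w θ η W c₁ c₂ τ b₀ ε₀ = 1 ∧
    0 ≤ deriv (fun s => btilde w θ η W c₁ c₂ s b₀ ε₀) τ}

/-!
The first point at which a differentiable function reaches a level `ℓ` from strictly below is an
upcrossing, that is, its derivative there is nonnegative. Let `f ≤ g` on `[0, ∞)` with `g 0 ≤ ℓ`,
and let `f` have an upcrossing at `t ≥ 0`, so that `ℓ ≤ g t`. If `g` is below `ℓ` somewhere on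
`[0, t]`, it reaches `ℓ` from below by time `t`; otherwise `g` starts at its minimum `ℓ`, and `0` is
an upcrossing when `0 < t`. If `t = 0`, then `f` and `g` agree at `0` and `f' 0 ≤ g' 0`.
-/

open Set Filter Topology

section OneSidedDeriv

variable {f g : ℝ → ℝ} {f' g' a : ℝ}

theorem hasDerivWithinAt_Ioi_le_of_eventuallyLE (hf : HasDerivWithinAt f f' (Ioi a) a)
    (hg : HasDerivWithinAt g g' (Ioi a) a) (ha : f a = g a) (hfg : f ≤ᶠ[𝓝[>] a] g) :
    f' ≤ g' := by
  rw [hasDerivWithinAt_iff_tendsto_slope' self_notMem_Ioi] at hf hg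
  refine le_of_tendsto_of_tendsto hf hg ?_
  filter_upwards [hfg, self_mem_nhdsWithin] with x hx hax
  rw [slope_def_field, slope_def_field, ha]
  exact div_le_div_of_nonneg_right (sub_le_sub_right hx _) (sub_nonneg.2 (mem_Ioi.1 hax).le)

theorem hasDerivWithinAt_Iio_le_of_eventuallyLE (hf : HasDerivWithinAt f f' (Iio a) a)
    (hg : HasDerivWithinAt g g' (Iio a) a) (ha : f a = g a) (hfg : f ≤ᶠ[𝓝[<] a] g) :
    g' ≤ f' := by
  rw [hasDerivWithinAt_iff_tendsto_slope' self_notMem_Iio] at hf hg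
  refine le_of_tendsto_of_tendsto hg hf ?_
  filter_upwards [hfg, self_mem_nhdsWithin] with x hx hxa
  rw [slope_def_field, slope_def_field, ha]
  exact div_le_div_of_nonpos_of_le (sub_nonpos.2 (mem_Iio.1 hxa).le) (sub_le_sub_right hx _)

end OneSidedDeriv

theorem exists_first_eq_of_lt_of_le {g : ℝ → ℝ} {a b ℓ : ℝ} (hab : a ≤ b)
    (hg : ContinuousOn g (Icc a b)) (ha : g a < ℓ) (hb : ℓ ≤ g b) :
    ∃ t ∈ Ioc a b, g t = ℓ ∧ ∀ x ∈ Ico a t, g x < ℓ := by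
  have hcompact : IsCompact (Icc a b ∩ g ⁻¹' Ici ℓ) :=
    isCompact_Icc.of_isClosed_subset (hg.preimage_isClosed_of_isClosed isClosed_Icc isClosed_Ici)
      inter_subset_left
  obtain ⟨t, ⟨⟨hat, htb⟩, hℓt⟩, hleast⟩ :=
    hcompact.exists_isLeast ⟨b, right_mem_Icc.2 hab, hb⟩
  have hbelow : ∀ x ∈ Ico a t, g x < ℓ := fun x hx =>
    not_le.1 fun hℓx => (hleast ⟨⟨hx.1, hx.2.le.trans htb⟩, hℓx⟩).not_gt hx.2
  obtain ⟨x, hx, hxℓ⟩ :=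
    intermediate_value_Ioc hat (hg.mono (Icc_subset_Icc_right htb)) ⟨ha, hℓt⟩
  obtain rfl : x = t := hx.2.antisymm (hleast ⟨⟨hx.1.le, hx.2.trans htb⟩, hxℓ.ge⟩)
  exact ⟨x, ⟨hx.1, htb⟩, hxℓ, hbelow⟩

/-- `g` has an upcrossing of the level `ℓ` at `t`: the times over which `Γ₁` takes an infimum. A
tangential contact with the level, even from above, counts as an upcrossing. Since `deriv` is `0`
where `g` is not differentiable, the notion is meaningful only at points of differentiability. -/
def IsUpcrossing (g : ℝ → ℝ) (ℓ t : ℝ) : Prop :=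
  g t = ℓ ∧ 0 ≤ deriv g t

theorem exists_isUpcrossing_of_lt_of_le {g : ℝ → ℝ} {a b ℓ : ℝ} (hab : a ≤ b)
    (hg : ∀ t ∈ Icc a b, DifferentiableAt ℝ g t) (ha : g a < ℓ) (hb : ℓ ≤ g b) :
    ∃ t ∈ Ioc a b, IsUpcrossing g ℓ t := by
  obtain ⟨t, ht, htℓ, hbelow⟩ := exists_first_eq_of_lt_of_le hab
    (fun t ht => (hg t ht).continuousAt.continuousWithinAt) ha hb
  have hle : g ≤ᶠ[𝓝[<] t] fun _ => ℓ := by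
    filter_upwards [Ico_mem_nhdsLT ht.1] with x hx using (hbelow x hx).le
  exact ⟨t, ht, htℓ, hasDerivWithinAt_Iio_le_of_eventuallyLE
    (hg t (Ioc_subset_Icc_self ht)).hasDerivAt.hasDerivWithinAt
    (hasDerivWithinAt_const ..) htℓ hle⟩

theorem exists_isUpcrossing_of_le_of_le {g : ℝ → ℝ} {a b ℓ : ℝ} (hab : a < b)
    (hg : ∀ t ∈ Icc a b, DifferentiableAt ℝ g t) (ha : g a ≤ ℓ) (hb : ℓ ≤ g b) :
    ∃ t ∈ Icc a b, IsUpcrossing g ℓ t := by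
  by_cases! hge : ∀ s ∈ Icc a b, ℓ ≤ g s
  · have ha_mem : a ∈ Icc a b := left_mem_Icc.2 hab.le
    have haℓ : g a = ℓ := ha.antisymm (hge a ha_mem)
    have hright : (fun _ => ℓ) ≤ᶠ[𝓝[>] a] g := by
      filter_upwards [Ioc_mem_nhdsGT hab] with x hx using hge x (Ioc_subset_Icc_self hx)
    exact ⟨a, ha_mem, haℓ, hasDerivWithinAt_Ioi_le_of_eventuallyLE (hasDerivWithinAt_const ..)
      (hg a ha_mem).hasDerivAt.hasDerivWithinAt haℓ.symm hright⟩
  · obtain ⟨s, hs, hsℓ⟩ := hge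
    obtain ⟨t, ht, hup⟩ := exists_isUpcrossing_of_lt_of_le hs.2
      (fun t ht => hg t (Icc_subset_Icc_left hs.1 ht)) hsℓ hb
    exact ⟨t, ⟨hs.1.trans ht.1.le, ht.2⟩, hup⟩

theorem IsUpcrossing.of_eventuallyLE_nhdsGT {f g : ℝ → ℝ} {a ℓ : ℝ} (h : IsUpcrossing f ℓ a)
    (hf : DifferentiableAt ℝ f a) (hg : DifferentiableAt ℝ g a) (ha : g a = ℓ)
    (hfg : f ≤ᶠ[𝓝[>] a] g) : IsUpcrossing g ℓ a :=
  ⟨ha, h.2.trans (hasDerivWithinAt_Ioi_le_of_eventuallyLE hf.hasDerivAt.hasDerivWithinAt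
    hg.hasDerivAt.hasDerivWithinAt (h.1.trans ha.symm) hfg)⟩

theorem IsUpcrossing.exists_of_le {f g : ℝ → ℝ} {a b ℓ : ℝ} (h : IsUpcrossing f ℓ b)
    (hab : a ≤ b) (hf : DifferentiableAt ℝ f a) (hg : ∀ t ≥ a, DifferentiableAt ℝ g t)
    (hfg : ∀ t ≥ a, f t ≤ g t) (ha : g a ≤ ℓ) : ∃ t ∈ Icc a b, IsUpcrossing g ℓ t := by
  have hb : ℓ ≤ g b := h.1.symm.trans_le (hfg b hab)
  obtain rfl | hab := hab.eq_or_lt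
  · have hle : f ≤ᶠ[𝓝[>] a] g := by
      filter_upwards [self_mem_nhdsWithin] with t ht using hfg t (mem_Ioi.1 ht).le
    exact ⟨a, ⟨le_rfl, le_rfl⟩, h.of_eventuallyLE_nhdsGT hf (hg a le_rfl) (ha.antisymm hb) hle⟩
  · exact exists_isUpcrossing_of_le_of_le hab (fun t ht => hg t ht.1) ha hb

/-- The infimum in `[0, ∞]` of the upcrossings of the level `ℓ` by `g` on `[0, ∞)`; it is `∞` if
there are none. The set is written as in `Γ₁`, so that `Γ₁` unfolds to this notion. -/
noncomputable def firstUpcrossing (g : ℝ → ℝ) (ℓ : ℝ) : ℝ≥0∞ :=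
  sInf {x : ℝ≥0∞ | ∃ t : ℝ, 0 ≤ t ∧ x = ENNReal.ofReal t ∧ IsUpcrossing g ℓ t}

theorem firstUpcrossing_le_of_le {f g : ℝ → ℝ} {ℓ : ℝ} (hf : DifferentiableAt ℝ f 0)
    (hg : ∀ t ≥ 0, DifferentiableAt ℝ g t) (hfg : ∀ t ≥ 0, f t ≤ g t) (h0 : g 0 ≤ ℓ) :
    firstUpcrossing g ℓ ≤ firstUpcrossing f ℓ := by
  refine le_sInf ?_
  rintro _ ⟨τ, hτ, rfl, hup⟩
  obtain ⟨t, ht, htup⟩ := hup.exists_of_le hτ hf hg hfg h0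
  calc firstUpcrossing g ℓ ≤ ENNReal.ofReal t := sInf_le ⟨t, ht.1, rfl, htup⟩
    _ ≤ ENNReal.ofReal τ := ENNReal.ofReal_le_ofReal ht.2

theorem exp_mul_sub_one_div_nonneg (a : ℝ) {τ : ℝ} (hτ : 0 ≤ τ) :
    0 ≤ (Real.exp (a * τ) - 1) / a := by
  obtain ha | ha := le_total 0 a
  · exact div_nonneg (sub_nonneg.2 (Real.one_le_exp (mul_nonneg ha hτ))) ha
  · exact div_nonneg_of_nonpos
      (sub_nonpos.2 (Real.exp_le_one_iff.2 (mul_nonpos_of_nonpos_of_nonneg ha hτ))) ha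

section Btilde

variable {w θ η W c₁ c₂ : ℝ}

theorem btilde_zero (b ε : ℝ) : btilde w θ η W c₁ c₂ 0 b ε = b := by
  simp [btilde, f₁, f₂]

theorem differentiable_btilde (b ε : ℝ) :
    Differentiable ℝ fun τ => btilde w θ η W c₁ c₂ τ b ε := by
  unfold btilde f₁ f₂
  exact Differentiable.div (by fun_prop) (by fun_prop) fun τ => (Real.exp_pos _).ne'

theorem btilde_le_btilde {τ b₀ b₁ ε₀ ε₁ : ℝ} (hW : 0 ≤ W) (hτ : 0 ≤ τ) (hb : b₀ ≤ b₁)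
    (hε : ε₀ ≤ ε₁) : btilde w θ η W c₁ c₂ τ b₀ ε₀ ≤ btilde w θ η W c₁ c₂ τ b₁ ε₁ := by
  have hcoeff := exp_mul_sub_one_div_nonneg (w + θ) hτ
  unfold btilde f₁ f₂
  simp only [div_mul_eq_mul_div (W * _), mul_div_assoc (W * _)]
  gcongr

theorem Γ₁_eq_firstUpcrossing (b ε : ℝ) :
    Γ₁ w θ η W c₁ c₂ b ε = firstUpcrossing (fun τ => btilde w θ η W c₁ c₂ τ b ε) 1 :=
  rfl

end Btilde

theorem stmt_8_general {w θ η W c₁ c₂ b₀ b₁ ε₀ ε₁ : ℝ} (_hw : w ≠ 0) (_hwθ : w + θ ≠ 0)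
    (_hwη : w + η ≠ 0) (hW : 0 ≤ W) (hb : b₀ ≤ b₁) (hb₁ : b₁ ≤ 1) (hε : ε₀ ≤ ε₁) :
    Γ₁ w θ η W c₁ c₂ b₁ ε₁ ≤ Γ₁ w θ η W c₁ c₂ b₀ ε₀ := by
  rw [Γ₁_eq_firstUpcrossing, Γ₁_eq_firstUpcrossing]
  exact firstUpcrossing_le_of_le (differentiable_btilde b₀ ε₀ 0)
    (fun τ _ => differentiable_btilde b₁ ε₁ τ) (fun _ hτ => btilde_le_btilde hW hτ hb hε)
    ((btilde_zero b₁ ε₁).trans_le hb₁)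

/-- Lemma 2(ii): monotonicity of `Γ₁`. -/
theorem stmt_8 (w θ η W c₁ c₂ : ℝ) (hw : 0 < w) (hθ : 0 < θ) (hη : 0 < η)
    (hW : 0 < W) (hc₁ : 0 ≤ c₁) (hc₂ : 0 ≤ c₂) :
    (∀ b₀ b₁ ε₀ ε₁ : ℝ, 0 ≤ b₀ → b₀ ≤ b₁ → b₁ ≤ 1 → 0 ≤ ε₀ → ε₀ ≤ ε₁ →
      Γ₁ w θ η W c₁ c₂ b₁ ε₁ ≤ Γ₁ w θ η W c₁ c₂ b₀ ε₀) ∧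
    ∀ b₀ ε₀ : ℝ, b₀ ∈ Set.Icc (0 : ℝ) 1 → 0 ≤ ε₀ →
      Γ₁ w θ η W c₁ c₂ 1 ε₀ ≤ Γ₁ w θ η W c₁ c₂ b₀ ε₀ := by
  have hwθ := (add_pos hw hθ).ne'
  have hwη := (add_pos hw hη).ne'
  exact ⟨fun _ _ _ _ _ hb hb₁ _ hε => stmt_8_general hw.ne' hwθ hwη hW.le hb hb₁ hε,
    fun _ _ hb _ => stmt_8_general hw.ne' hwθ hwη hW.le hb.2 le_rfl le_rfl⟩
end

section
/- Let b₀ ∈ ℝ and ε₀ > 0. Then at every τ* > 0 with (∂/∂τ)b̃(τ*, b₀, ε₀) = 0 one has (∂²/∂τ²)b̃(τ*, b₀, ε₀) = W·ε₀·θ·e^{θτ*} + c₂·η·e^{ητ*} > 0; consequently the function τ ↦ b̃(τ, b₀, ε₀) has no local maximum on (0, ∞). -/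
open Real

/-! The quotient `b̃` solves a linear equation `b̃' = -w b̃ + g` with an explicit forcing term `g`.
Differentiating once more, the term `-w b̃'` vanishes at a critical point, so the second derivative
of `b̃` equals the derivative of `g` there, which is positive. This contradicts the second-order
necessary condition for a local maximum. -/

section Calculus

theorem hasDerivAt_exp_const_mul (a x : ℝ) :
    HasDerivAt (fun s => exp (a * s)) (a * exp (a * x)) x := by
  simpa [mul_comm] using ((hasDerivAt_id x).const_mul a).exp

theorem hasDerivAt_div_mul_exp_sub_one {a : ℝ} (ha : a ≠ 0) (c x : ℝ) :
    HasDerivAt (fun s => c / a * (exp (a * s) - 1)) (c * exp (a * x)) x := by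
  refine (((hasDerivAt_exp_const_mul a x).sub_const 1).const_mul (c / a)).congr_deriv ?_
  field_simp

theorem hasDerivAt_deriv_of_deriv_eq_comp_add {𝕜 E : Type*} [NontriviallyNormedField 𝕜]
    [NormedAddCommGroup E] [NormedSpace 𝕜 E] {f g : 𝕜 → E} {v : E → E} {g' : E} {x : 𝕜}
    (hode : deriv f =ᶠ[nhds x] fun t => v (f t) + g t) (hv : DifferentiableAt 𝕜 v (f x))
    (hf : HasDerivAt f 0 x) (hg : HasDerivAt g g' x) : HasDerivAt (deriv f) g' x := by
  have hvf : HasDerivAt (fun t => v (f t)) 0 x := by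
    simpa only [map_zero, Function.comp_def] using hv.hasFDerivAt.comp_hasDerivAt x hf
  simpa only [zero_add] using (hvf.fun_add hg).congr_of_eventuallyEq hode

theorem deriv_deriv_nonpos_of_isLocalMax {f : ℝ → ℝ} {x : ℝ} (hf : ContinuousAt f x)
    (hmax : IsLocalMax f x) : deriv (deriv f) x ≤ 0 := by
  by_contra! hpos
  -- The second derivative test makes `x` a local minimum too, so `f` is constant near `x`.
  have hmin : IsLocalMin f x := isLocalMin_of_deriv_deriv_pos hpos hmax.deriv_eq_zero hf
  have hconst : f =ᶠ[nhds x] fun _ => f x := by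
    filter_upwards [hmax, hmin] with y hle hge using le_antisymm hle hge
  have hzero : deriv (deriv f) x = 0 := by
    simpa only [deriv_const'] using hconst.deriv.deriv_eq
  exact hpos.ne' hzero

end Calculus

section ComparisonFunction

/-- The inhomogeneous term `g` of the linear equation `b̃' = -w b̃ + g`. -/
noncomputable def forcing (θ η W c₁ c₂ ε₀ τ : ℝ) : ℝ :=
  W * ε₀ * exp (θ * τ) + c₁ + c₂ * (exp (η * τ) - 1)

variable {w θ η : ℝ} (W c₁ c₂ b₀ ε₀ : ℝ)

theorem hasDerivAt_forcing (τ : ℝ) :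
    HasDerivAt (forcing θ η W c₁ c₂ ε₀)
      (W * ε₀ * θ * exp (θ * τ) + c₂ * η * exp (η * τ)) τ := by
  have hθ := ((hasDerivAt_exp_const_mul θ τ).const_mul (W * ε₀)).add_const c₁
  have hη := ((hasDerivAt_exp_const_mul η τ).sub_const 1).const_mul c₂
  exact (hθ.add hη).congr_deriv (by ring)

theorem hasDerivAt_f₁ (hw : w ≠ 0) (hwθ : w + θ ≠ 0) (hwη : w + η ≠ 0) (τ : ℝ) :
    HasDerivAt (fun s => f₁ w θ η W c₁ c₂ s b₀ ε₀) (f₂ w τ * forcing θ η W c₁ c₂ ε₀ τ) τ := by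
  have hsum := (((hasDerivAt_div_mul_exp_sub_one hwθ (W * ε₀) τ).const_add b₀).add
    (hasDerivAt_div_mul_exp_sub_one hw (c₁ - c₂) τ)).add
    (hasDerivAt_div_mul_exp_sub_one hwη c₂ τ)
  refine hsum.congr_deriv ?_
  simp only [f₂, forcing, add_mul, exp_add]
  ring

theorem hasDerivAt_btilde (hw : w ≠ 0) (hwθ : w + θ ≠ 0) (hwη : w + η ≠ 0) (τ : ℝ) :
    HasDerivAt (fun s => btilde w θ η W c₁ c₂ s b₀ ε₀)
      (-w * btilde w θ η W c₁ c₂ τ b₀ ε₀ + forcing θ η W c₁ c₂ ε₀ τ) τ := by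
  have hf₂ : HasDerivAt (f₂ w) (w * f₂ w τ) τ := hasDerivAt_exp_const_mul w τ
  have hf₂_ne : f₂ w τ ≠ 0 := exp_ne_zero _
  refine ((hasDerivAt_f₁ W c₁ c₂ b₀ ε₀ hw hwθ hwη τ).fun_div hf₂ hf₂_ne).congr_deriv ?_
  rw [btilde]
  field_simp
  ring

theorem deriv_deriv_btilde_of_deriv_eq_zero (hw : w ≠ 0) (hwθ : w + θ ≠ 0) (hwη : w + η ≠ 0)
    {τ : ℝ} (hcrit : deriv (fun s => btilde w θ η W c₁ c₂ s b₀ ε₀) τ = 0) :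
    deriv (deriv (fun s => btilde w θ η W c₁ c₂ s b₀ ε₀)) τ =
      W * ε₀ * θ * exp (θ * τ) + c₂ * η * exp (η * τ) := by
  have hode := hasDerivAt_btilde W c₁ c₂ b₀ ε₀ hw hwθ hwη
  have hzero : HasDerivAt (fun s => btilde w θ η W c₁ c₂ s b₀ ε₀) 0 τ :=
    hcrit ▸ (hode τ).differentiableAt.hasDerivAt
  exact (hasDerivAt_deriv_of_deriv_eq_comp_add (v := fun y => -w * y)
    (.of_forall fun s => (hode s).deriv) (by fun_prop) hzero
    (hasDerivAt_forcing W c₁ c₂ ε₀ τ)).deriv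

end ComparisonFunction

theorem stmt_12_general (w θ η W c₁ c₂ : ℝ) (hw : w ≠ 0) (hwθ : w + θ ≠ 0) (hwη : w + η ≠ 0)
    (b₀ ε₀ : ℝ) (hWεθ : 0 < W * ε₀ * θ) (hc₂η : 0 ≤ c₂ * η) :
    (∀ τ : ℝ, deriv (fun s => btilde w θ η W c₁ c₂ s b₀ ε₀) τ = 0 →
      deriv (deriv (fun s => btilde w θ η W c₁ c₂ s b₀ ε₀)) τ =
          W * ε₀ * θ * exp (θ * τ) + c₂ * η * exp (η * τ) ∧
        0 < deriv (deriv (fun s => btilde w θ η W c₁ c₂ s b₀ ε₀)) τ) ∧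
    ∀ τ : ℝ, ¬ IsLocalMax (fun s => btilde w θ η W c₁ c₂ s b₀ ε₀) τ := by
  have hderiv₂ {τ : ℝ} (hcrit : deriv (fun s => btilde w θ η W c₁ c₂ s b₀ ε₀) τ = 0) :=
    deriv_deriv_btilde_of_deriv_eq_zero W c₁ c₂ b₀ ε₀ hw hwθ hwη hcrit
  have hpos (τ : ℝ) : 0 < W * ε₀ * θ * exp (θ * τ) + c₂ * η * exp (η * τ) := by positivity
  refine ⟨fun τ hcrit => ⟨hderiv₂ hcrit, hderiv₂ hcrit ▸ hpos τ⟩, fun τ hmax => ?_⟩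
  have hcont := (hasDerivAt_btilde W c₁ c₂ b₀ ε₀ hw hwθ hwη τ).continuousAt
  have hnonpos := deriv_deriv_nonpos_of_isLocalMax hcont hmax
  rw [hderiv₂ hmax.deriv_eq_zero] at hnonpos
  exact (hpos τ).not_ge hnonpos

/-- Key step in the proof of Lemma 6: at critical points of `b̃` the second
derivative is positive, hence `b̃` has no local maximum on `(0, ∞)`. -/
theorem stmt_12 (w θ η W c₁ c₂ : ℝ) (hw : 0 < w) (hθ : 0 < θ) (hη : 0 < η)
    (hW : 0 < W) (hc₁ : 0 ≤ c₁) (hc₂ : 0 ≤ c₂) (b₀ ε₀ : ℝ) (hε₀ : 0 < ε₀) :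
    (∀ τ : ℝ, 0 < τ → deriv (fun s => btilde w θ η W c₁ c₂ s b₀ ε₀) τ = 0 →
      deriv (deriv (fun s => btilde w θ η W c₁ c₂ s b₀ ε₀)) τ =
          W * ε₀ * θ * Real.exp (θ * τ) + c₂ * η * Real.exp (η * τ) ∧
        0 < deriv (deriv (fun s => btilde w θ η W c₁ c₂ s b₀ ε₀)) τ) ∧
    ∀ τ : ℝ, 0 < τ → ¬ IsLocalMax (fun s => btilde w θ η W c₁ c₂ s b₀ ε₀) τ := by
  have hgen := stmt_12_general w θ η W c₁ c₂ hw.ne' (by positivity) (by positivity) b₀ ε₀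
    (by positivity) (by positivity)
  exact ⟨fun τ _ => hgen.1 τ, fun τ _ => hgen.2 τ⟩
end
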